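/- If D is invertible, then the matrix S(0) = [[D, G], [G*, 0]] is singular if and only if G*D⁻¹G is singular. In particular, if D is positive definite then 0 is not an eigenvalue of the pencil S(λ), so Λ(S) = Λ(P) \ {0}. -/

import Mathlib

open Matrix ComplexOrder

/-!
Singularity of `S(0)` is read off the Schur complement `-G* D⁻¹ G` of `D`. If `D` is positive
definite, so is `G* D⁻¹ G`, because `G` has full column rank. For the other eigenvalues no inverse
is needed: with `A = zM + D`,
`[[A, G], [G*, -zI]] * [[zI, 0], [G*, I]] = [[zA + GG*, G], [0, -zI]]`,
and taking determinants gives `det S(z) * zⁿ = det P(z) * (-z)ʳ` for every `z`.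
-/

section CommRing

variable {m n R : Type*} [CommRing R] [DecidableEq n]

/-- The pencil `S(z) = z diag(M, -I) + [[D, B], [C, 0]]`, evaluated at `z`. The case of interest
is `B = G`, `C = G*`; with two independent off-diagonal blocks no star operation on `R` is
needed. -/
def linearizationPencil (M D : Matrix m m R) (B : Matrix m n R) (C : Matrix n m R) (z : R) :
    Matrix (m ⊕ n) (m ⊕ n) R :=
  z • fromBlocks M 0 0 (-1) + fromBlocks D B C 0

theorem linearizationPencil_zero (M D : Matrix m m R) (B : Matrix m n R) (C : Matrix n m R) :
    linearizationPencil M D B C 0 = fromBlocks D B C 0 := by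
  rw [linearizationPencil, zero_smul, zero_add]

variable [Fintype n]

/-- The quadratic matrix polynomial `P(z) = z²M + zD + BC`, evaluated at `z`, which
`linearizationPencil M D B C` linearizes away from `z = 0`. -/
def quadraticMatrixPoly (M D : Matrix m m R) (B : Matrix m n R) (C : Matrix n m R) (z : R) :
    Matrix m m R :=
  z ^ 2 • M + z • D + B * C

variable [Fintype m] [DecidableEq m]

theorem det_fromBlocks_zero₂₂ {A : Matrix m m R} (hA : IsUnit A.det) (B : Matrix m n R)
    (C : Matrix n m R) :
    (fromBlocks A B C 0).det = A.det * ((-1) ^ Fintype.card n * (C * A⁻¹ * B).det) := by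
  let := A.invertibleOfIsUnitDet hA
  rw [det_fromBlocks₁₁, invOf_eq_nonsing_inv, zero_sub, det_neg]

theorem det_fromBlocks_zero₂₂_eq_zero_iff {A : Matrix m m R} (hA : IsUnit A.det)
    (B : Matrix m n R) (C : Matrix n m R) :
    (fromBlocks A B C 0).det = 0 ↔ (C * A⁻¹ * B).det = 0 := by
  rw [det_fromBlocks_zero₂₂ hA, hA.mul_right_eq_zero,
    (isUnit_neg_one.pow (Fintype.card n)).mul_right_eq_zero]

theorem linearizationPencil_mul_fromBlocks (M D : Matrix m m R) (B : Matrix m n R)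
    (C : Matrix n m R) (z : R) :
    linearizationPencil M D B C z * fromBlocks (z • 1) 0 C 1 =
      fromBlocks (quadraticMatrixPoly M D B C z) B 0 (-(z • 1)) := by
  simp [linearizationPencil, quadraticMatrixPoly, fromBlocks_smul, fromBlocks_add,
    fromBlocks_multiply, smul_smul, pow_two]

theorem det_linearizationPencil_mul_pow (M D : Matrix m m R) (B : Matrix m n R)
    (C : Matrix n m R) (z : R) :
    (linearizationPencil M D B C z).det * z ^ Fintype.card m =
      (quadraticMatrixPoly M D B C z).det * (-z) ^ Fintype.card n := by
  have h := congrArg det (linearizationPencil_mul_fromBlocks M D B C z)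
  rwa [det_mul, det_fromBlocks_zero₁₂, det_fromBlocks_zero₂₁, ← neg_smul, det_smul, det_smul,
    det_one, det_one, mul_one, mul_one, mul_one] at h

theorem det_linearizationPencil_eq_zero_iff [NoZeroDivisors R] (M D : Matrix m m R)
    (B : Matrix m n R) (C : Matrix n m R) {z : R} (hz : z ≠ 0) :
    (linearizationPencil M D B C z).det = 0 ↔ (quadraticMatrixPoly M D B C z).det = 0 := by
  have : Nontrivial R := nontrivial_of_ne z 0 hz
  rw [← mul_eq_zero_iff_right (pow_ne_zero (Fintype.card m) hz), det_linearizationPencil_mul_pow,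
    mul_eq_zero_iff_right (pow_ne_zero (Fintype.card n) (neg_ne_zero.mpr hz))]

theorem setOf_det_linearizationPencil_eq_zero [NoZeroDivisors R] {M D : Matrix m m R}
    {B : Matrix m n R} {C : Matrix n m R} (h₀ : (linearizationPencil M D B C 0).det ≠ 0) :
    {z | (linearizationPencil M D B C z).det = 0} =
      {z | (quadraticMatrixPoly M D B C z).det = 0} \ {0} := by
  ext z
  simp only [Set.mem_ofPred_eq, Set.mem_sdiff, Set.mem_singleton_iff]
  obtain rfl | hz := eq_or_ne z 0
  · simp only [h₀, not_true_eq_false, and_false]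
  · simp only [det_linearizationPencil_eq_zero_iff M D B C hz, hz, not_false_eq_true, and_true]

end CommRing

section Field

variable {m n K : Type*} [Fintype n] [Field K]

theorem mulVec_injective_of_rank_eq_card {A : Matrix m n K} (hA : A.rank = Fintype.card n) :
    Function.Injective A.mulVec := by
  rw [mulVec_injective_iff, linearIndependent_iff_card_eq_finrank_span, ← hA]
  exact A.rank_eq_finrank_span_cols

variable [PartialOrder K] [StarRing K] [Fintype m] [DecidableEq m] [DecidableEq n]

theorem det_conjTranspose_mul_inv_mul_ne_zero_of_posDef {D : Matrix m m K} (hD : D.PosDef)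
    {G : Matrix m n K} (hG : G.rank = Fintype.card n) : (Gᴴ * D⁻¹ * G).det ≠ 0 := by
  have hSchur : (Gᴴ * D⁻¹ * G).PosDef :=
    hD.inv.conjTranspose_mul_mul_same (mulVec_injective_of_rank_eq_card hG)
  exact (isUnit_iff_isUnit_det _).mp hSchur.isUnit |>.ne_zero

theorem det_linearizationPencil_zero_ne_zero_of_posDef (M : Matrix m m K) {D : Matrix m m K}
    (hD : D.PosDef) {G : Matrix m n K} (hG : G.rank = Fintype.card n) :
    (linearizationPencil M D G Gᴴ 0).det ≠ 0 := by
  have hDdet : IsUnit D.det := (isUnit_iff_isUnit_det D).mp hD.isUnit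
  rw [linearizationPencil_zero, Ne, det_fromBlocks_zero₂₂_eq_zero_iff hDdet]
  exact det_conjTranspose_mul_inv_mul_ne_zero_of_posDef hD hG

theorem stmt2_general (M : Matrix m m K) {D : Matrix m m K} (hD : IsUnit D.det)
    {G : Matrix m n K} (hG : G.rank = Fintype.card n) :
    ((fromBlocks D G Gᴴ 0).det = 0 ↔ (Gᴴ * D⁻¹ * G).det = 0) ∧
    (D.PosDef →
      (linearizationPencil M D G Gᴴ 0).det ≠ 0 ∧
      {z | (linearizationPencil M D G Gᴴ z).det = 0} =
        {z | (quadraticMatrixPoly M D G Gᴴ z).det = 0} \ {0}) := by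
  refine ⟨det_fromBlocks_zero₂₂_eq_zero_iff hD G Gᴴ, fun hDpos ↦ ?_⟩
  have h₀ := det_linearizationPencil_zero_ne_zero_of_posDef M hDpos hG
  exact ⟨h₀, setOf_det_linearizationPencil_eq_zero h₀⟩

end Field

/-- If `D` is invertible then `S(0) = [[D, G], [G*, 0]]` is singular iff `G* D⁻¹ G` is
singular; in particular if `D` is positive definite then `0` is not an eigenvalue of the
pencil `S(λ)`, so `Λ(S) = Λ(P) \ {0}`. -/
theorem stmt2 {n r : ℕ} (hn : 0 < n) (hr : 0 < r) (hrn : r ≤ n)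
    (M D : Matrix (Fin n) (Fin n) ℂ) (hM : M.PosDef) (hDH : D.IsHermitian)
    (hDinv : IsUnit D.det)
    (G : Matrix (Fin n) (Fin r) ℂ) (hG : G.rank = r)
    (P : ℂ → Matrix (Fin n) (Fin n) ℂ)
    (hP : ∀ z : ℂ, P z = z ^ 2 • M + z • D + G * Gᴴ)
    (S : ℂ → Matrix (Fin n ⊕ Fin r) (Fin n ⊕ Fin r) ℂ)
    (hS : ∀ z : ℂ, S z = z • Matrix.fromBlocks M 0 0 (-1) + Matrix.fromBlocks D G Gᴴ 0) :
    ((Matrix.fromBlocks D G Gᴴ 0).det = 0 ↔ (Gᴴ * D⁻¹ * G).det = 0) ∧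
    (D.PosDef →
      (S 0).det ≠ 0 ∧ {z : ℂ | (S z).det = 0} = {z : ℂ | (P z).det = 0} \ {0}) := by
  obtain ⟨rfl, rfl⟩ : P = quadraticMatrixPoly M D G Gᴴ ∧ S = linearizationPencil M D G Gᴴ :=
    ⟨funext hP, funext hS⟩
  exact stmt2_general M hDinv (hG.trans (Fintype.card_fin r).symm)
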